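/- Let Δ = [a,b] ⊂ ℝ ⊂ ℂ be a segment, let (n_k) be a strictly increasing sequence of natural numbers, and let (q_{n_k}) be a sequence of complex polynomials with deg q_{n_k} ≤ n_k and sup-norm ‖q_{n_k}‖_Δ = 1 for every k. Then the set A = {z ∈ Δ : lim_{k→∞} |q_{n_k}(z)|^{1/n_k} = 0} is a polar subset of ℂ. -/

import Mathlib

open Filter Metric

noncomputable section

/-- A subharmonic function on `ℂ` with values in `[-∞, ∞)`: upper semicontinuous,
never `+∞`, and dominated on every closed disk by every continuous function which is
harmonic inside the disk and dominates it on the boundary circle. -/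
def SubharmonicFn (u : ℂ → EReal) : Prop :=
  UpperSemicontinuous u ∧ (∀ z, u z ≠ ⊤) ∧
  ∀ (c : ℂ) (r : ℝ), 0 < r →
    ∀ h : ℂ → ℝ, ContinuousOn h (closedBall c r) →
      (∃ F : ℂ → ℂ, DifferentiableOn ℂ F (ball c r) ∧ ∀ z ∈ ball c r, h z = (F z).re) →
      (∀ z ∈ sphere c r, u z ≤ ((h z : ℝ) : EReal)) →
      ∀ z ∈ closedBall c r, u z ≤ ((h z : ℝ) : EReal)

/-- A set `S ⊆ ℂ` is polar if it is contained in the `-∞` set of a subharmonic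
function on `ℂ` which is not identically `-∞`. -/
def PolarSet (S : Set ℂ) : Prop :=
  ∃ u : ℂ → EReal, SubharmonicFn u ∧ (∃ z, u z ≠ ⊥) ∧ ∀ z ∈ S, u z = ⊥

/-!
If `|Q x|` is much smaller than `‖Q‖_Δ`, then the zeros of `Q` accumulate logarithmically at `x`:
along the branch of `x` in a dyadic tree over `Δ`, the numbers of zeros in the cells have a large
sum. Two grids offset by a third are used, since a zero can be close to `x` without sharing small
cells with `x`. Truncating the partial sums at a multiple of `n_k` and rescaling gives weights which
are bounded in `ℓ²` and whose sums along the branch of each `x ∈ A` are eventually at least `1`.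
Mazur's lemma replaces the sequence of weights by a single square summable one `G`.

By Dirichlet's principle the set of branches along which `G` sums to at least `1` has conductance at
most `‖G‖²` when seen from the root of the tree. The current of this electrical network is a flow
on the tree with a small total mass, hence a measure on `Δ`, whose masses of the cells sum to at
least `1 / 2` along each of these branches. Superposing such flows with summable masses gives a
measure whose logarithmic potential is `-∞` on `A`.
-/

open InnerProductSpace Topology

section HarmonicSupport

/-- `v` is supported from below at `z₀` by a harmonic function, that is, it dominates near `z₀` a
harmonic function with the same value at `z₀`. This is a local form of the sub-mean value property
that passes to sums and maxima and suffices for the maximum principle. -/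
def HasHarmonicSupportAt (v : ℂ → ℝ) (z₀ : ℂ) : Prop :=
  ∃ g : ℂ → ℝ, HarmonicAt g z₀ ∧ (∀ᶠ z in 𝓝 z₀, g z ≤ v z) ∧ g z₀ = v z₀

namespace HasHarmonicSupportAt

variable {v w : ℂ → ℝ} {z₀ : ℂ}

theorem add (hv : HasHarmonicSupportAt v z₀) (hw : HasHarmonicSupportAt w z₀) :
    HasHarmonicSupportAt (fun z => v z + w z) z₀ := by
  obtain ⟨g, hg, hgv, hgv₀⟩ := hv
  obtain ⟨k, hk, hkw, hkw₀⟩ := hw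
  refine ⟨g + k, hg.add hk, ?_, congrArg₂ (· + ·) hgv₀ hkw₀⟩
  filter_upwards [hgv, hkw] with z hgz hkz using add_le_add hgz hkz

theorem const_mul {c : ℝ} (hc : 0 ≤ c) (hv : HasHarmonicSupportAt v z₀) :
    HasHarmonicSupportAt (fun z => c * v z) z₀ := by
  obtain ⟨g, hg, hgv, hgv₀⟩ := hv
  refine ⟨c • g, hg.const_smul, ?_, congrArg (c * ·) hgv₀⟩
  filter_upwards [hgv] with z hgz using mul_le_mul_of_nonneg_left hgz hc

theorem sum {ι : Type*} {s : Finset ι} {v : ι → ℂ → ℝ}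
    (hv : ∀ i ∈ s, HasHarmonicSupportAt (v i) z₀) :
    HasHarmonicSupportAt (fun z => ∑ i ∈ s, v i z) z₀ := by
  classical
  induction s using Finset.induction_on with
  | empty => exact ⟨fun _ => 0, harmonicAt_const 0, by simp, by simp⟩
  | insert i s hi ih =>
    simp only [Finset.sum_insert hi]
    exact (hv i (s.mem_insert_self i)).add (ih fun k hk => hv k (Finset.mem_insert_of_mem hk))

theorem sub_harmonicAt (hv : HasHarmonicSupportAt v z₀) (hw : HarmonicAt w z₀) :
    HasHarmonicSupportAt (fun z => v z - w z) z₀ := by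
  obtain ⟨g, hg, hgv, hgv₀⟩ := hv
  refine ⟨g - w, hg.sub hw, ?_, congrArg (· - w z₀) hgv₀⟩
  filter_upwards [hgv] with z hgz using sub_le_sub_right hgz _

/-- Locally a harmonic `g` is `re G` with `G` holomorphic, and `‖exp G‖ = exp g` obeys the maximum
modulus principle. -/
theorem eventually_eq_of_isLocalMax (hv : HasHarmonicSupportAt v z₀) (hmax : IsLocalMax v z₀) :
    ∀ᶠ z in 𝓝 z₀, v z = v z₀ := by
  obtain ⟨g, hg, hgv, hgv₀⟩ := hv
  obtain ⟨r, hr, hgr⟩ := Metric.eventually_nhds_iff_ball.1 hg.eventually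
  obtain ⟨G, hG, hGg⟩ := HarmonicOnNhd.exists_analyticOnNhd_ball_re_eq hgr
  have hmem : ∀ᶠ z in 𝓝 z₀, z ∈ ball z₀ r := ball_mem_nhds z₀ hr
  have norm_exp_G : ∀ z ∈ ball z₀ r, ‖Complex.exp (G z)‖ = Real.exp (g z) := fun z hz => by
    exact (Complex.norm_exp _).trans (congrArg Real.exp (hGg hz))
  have hz₀ := norm_exp_G z₀ (mem_ball_self hr)
  have hconst : ∀ᶠ z in 𝓝 z₀, ‖Complex.exp (G z)‖ = ‖Complex.exp (G z₀)‖ := by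
    refine Complex.norm_eventually_eq_of_isLocalMax
      (hmem.mono fun z hz => (hG z hz).differentiableAt.cexp) ?_
    filter_upwards [hmem, hgv, hmax] with z hz hgz hvz
    simp only [Function.comp_apply, norm_exp_G z hz, hz₀, Real.exp_le_exp]
    linarith
  filter_upwards [hmem, hgv, hmax, hconst] with z hz hgz hvz hcz
  rw [norm_exp_G z hz, hz₀, Real.exp_eq_exp] at hcz
  linarith

end HasHarmonicSupportAt

theorem hasHarmonicSupportAt_log_max_norm {f g : ℂ → ℂ} {z₀ : ℂ} (hf : AnalyticAt ℂ f z₀)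
    (hg : AnalyticAt ℂ g z₀) (hfg : f z₀ ≠ g z₀) :
    HasHarmonicSupportAt (fun z => Real.log (max ‖f z‖ ‖g z‖)) z₀ := by
  wlog hle : ‖f z₀‖ ≤ ‖g z₀‖ generalizing f g
  · simpa only [max_comm] using this hg hf hfg.symm (le_of_not_ge hle)
  have hg₀ : g z₀ ≠ 0 := fun h => hfg <| by simp_all
  refine ⟨fun z => Real.log ‖g z‖, hg.harmonicAt_log_norm hg₀, ?_, by simp only [max_eq_right hle]⟩
  filter_upwards [hg.continuousAt.eventually_ne hg₀] with z hz
  exact Real.log_le_log (norm_pos_iff.2 hz) (le_max_right _ _)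

theorem nonpos_on_closedBall_of_hasHarmonicSupportAt {w : ℂ → ℝ} {c : ℂ} {r : ℝ}
    (hw : ContinuousOn w (closedBall c r)) (hsupp : ∀ z ∈ ball c r, HasHarmonicSupportAt w z)
    (hsphere : ∀ z ∈ sphere c r, w z ≤ 0) : ∀ z ∈ closedBall c r, w z ≤ 0 := by
  intro z hz
  obtain ⟨z₁, hz₁, hmax⟩ := (isCompact_closedBall c r).exists_isMaxOn ⟨z, hz⟩ hw
  refine (hmax hz).trans (not_lt.1 fun hpos => ?_)
  -- The set where `w` attains a positive maximum would be compact and open.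
  set K := closedBall c r ∩ w ⁻¹' {w z₁}
  have hK_compact : IsCompact K := (isCompact_closedBall c r).of_isClosed_subset
    (hw.preimage_isClosed_of_isClosed isClosed_closedBall isClosed_singleton) Set.inter_subset_left
  have hK_open : IsOpen K := isOpen_iff_mem_nhds.2 fun y ⟨hy, hwy⟩ => by
    have hy_ball : y ∈ ball c r := (mem_closedBall.1 hy).lt_of_ne fun h =>
      (hsphere y h).not_gt (by rwa [Set.mem_preimage.1 hwy])
    have hnear : ∀ᶠ z in 𝓝 y, z ∈ closedBall c r :=
      mem_of_superset (isOpen_ball.mem_nhds hy_ball) ball_subset_closedBall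
    have hy_max : IsLocalMax w y := hnear.mono fun z hz => (hmax hz).trans_eq hwy.symm
    filter_upwards [hnear, (hsupp y hy_ball).eventually_eq_of_isLocalMax hy_max] with z hz hwz
      using ⟨hz, hwz.trans hwy⟩
  have hK_univ : K = Set.univ := IsClopen.eq_univ ⟨hK_compact.isClosed, hK_open⟩ ⟨z₁, hz₁, rfl⟩
  exact noncompact_univ ℂ (hK_univ ▸ hK_compact)

theorem exists_forall_lt_of_antitone {X : Type*} [TopologicalSpace X] [CompactSpace X]
    {v : ℕ → X → ℝ} (hv : ∀ n, Continuous (v n)) (hanti : Antitone v) {h : X → ℝ}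
    (hh : Continuous h) (hlt : ∀ x, ∃ n, v n x < h x) : ∃ n, ∀ x, v n x < h x := by
  obtain ⟨n, hn⟩ := isCompact_univ.elim_directed_cover (fun n => {x | v n x < h x})
    (fun n => isOpen_lt (hv n) hh) (fun x _ => Set.mem_iUnion.2 (hlt x))
    (Monotone.directed_le fun m n hmn x hx => (hanti hmn x).trans_lt hx)
  exact ⟨n, fun x => hn (Set.mem_univ x)⟩

theorem subharmonicFn_iInf {v : ℕ → ℂ → ℝ} (hv : ∀ n, Continuous (v n)) (hanti : Antitone v)
    (hsupp : ∀ n z, HasHarmonicSupportAt (v n) z) :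
    SubharmonicFn fun z => ⨅ n, (v n z : EReal) := by
  refine ⟨upperSemicontinuous_iInf fun n =>
    (continuous_coe_real_ereal.comp (hv n)).upperSemicontinuous, fun z =>
    ((iInf_le _ 0).trans_lt (EReal.coe_lt_top (v 0 z))).ne, ?_⟩
  rintro c r - h hh ⟨F, hF, hFh⟩ hle z hz
  have hhar : ∀ y ∈ ball c r, HarmonicAt h y := fun y hy => by
    have hy_nhds := isOpen_ball.mem_nhds hy
    refine (harmonicAt_congr_nhds ?_).1 (hF.analyticAt hy_nhds).harmonicAt_re
    filter_upwards [hy_nhds] with x hx using (hFh x hx).symm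
  refine EReal.le_of_forall_lt_iff_le.1 fun t ht => ?_
  have hε : 0 < t - h z := sub_pos.2 (EReal.coe_lt_coe_iff.1 ht)
  obtain ⟨n, hn⟩ : ∃ n, ∀ y : sphere c r, v n y < h y + (t - h z) := by
    refine exists_forall_lt_of_antitone (v := fun n (y : sphere c r) => v n y)
      (fun n => (hv n).comp continuous_subtype_val) (fun m n hmn y => hanti hmn y)
      ((hh.mono sphere_subset_closedBall).domRestrict.add continuous_const) fun y => ?_
    have hlt := (hle y y.2).trans_lt (EReal.coe_lt_coe_iff.2 (lt_add_of_pos_right (h y) hε))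
    simpa only [iInf_lt_iff, EReal.coe_lt_coe_iff] using hlt
  have hmax := nonpos_on_closedBall_of_hasHarmonicSupportAt
    (w := fun y => v n y - (h y + (t - h z)))
    ((hv n).continuousOn.sub (hh.add continuousOn_const))
    (fun y hy => (hsupp n y).sub_harmonicAt ((hhar y hy).add (harmonicAt_const _)))
    (fun y hy => (sub_neg.2 (hn ⟨y, hy⟩)).le) z hz
  exact (iInf_le _ n).trans (EReal.coe_le_coe_iff.2 (by linarith))

end HarmonicSupport

section DyadicTree

/-- The `j`-th node of the branch of `y` in the infinite binary tree: node `i` of level `j` stands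
for the cell `[i / 2 ^ j, (i + 1) / 2 ^ j)` and has the children `2 * i` and `2 * i + 1`. Negative
`y` are sent to node `0`. -/
def dyadicNode (j : ℕ) (y : ℝ) : ℕ := ⌊2 ^ j * y⌋₊

/-- The sum of the weights `g` over the first `n` nodes of the branch of `y`. -/
def branchSum (g : ℕ → ℕ → ℝ) (y : ℝ) (n : ℕ) : ℝ := ∑ j ∈ Finset.range n, g j (dyadicNode j y)

theorem dyadicNode_succ_div_two (j : ℕ) (y : ℝ) : dyadicNode (j + 1) y / 2 = dyadicNode j y := by
  rw [dyadicNode, dyadicNode, ← Nat.floor_div_ofNat, pow_succ]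
  congr 1
  ring

theorem dyadicNode_succ_eq (j : ℕ) (y : ℝ) :
    dyadicNode (j + 1) y = 2 * dyadicNode j y ∨ dyadicNode (j + 1) y = 2 * dyadicNode j y + 1 := by
  have := dyadicNode_succ_div_two j y
  omega

theorem dyadicNode_zero_of_mem_Ico {y : ℝ} (hy : y ∈ Set.Ico (0 : ℝ) 1) : dyadicNode 0 y = 0 := by
  simpa [dyadicNode] using hy.2

theorem branchSum_succ (g : ℕ → ℕ → ℝ) (y : ℝ) (n : ℕ) :
    branchSum g y (n + 1) = branchSum g y n + g n (dyadicNode n y) :=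
  Finset.sum_range_succ _ _

theorem branchSum_monotone {g : ℕ → ℕ → ℝ} (hg : ∀ j i, 0 ≤ g j i) (y : ℝ) :
    Monotone (branchSum g y) :=
  monotone_nat_of_le_succ fun n => by
    rw [branchSum_succ]
    exact le_add_of_nonneg_right (hg _ _)

/-- A nonnegative flow on the binary tree: the mass of a node is split among its children, so that
`θ j i` is the mass which a measure on the boundary gives to the cell `i` of level `j`. -/
structure IsFlow (θ : ℕ → ℕ → ℝ) : Prop where
  nonneg : ∀ j i, 0 ≤ θ j i
  split : ∀ j i, θ (j + 1) (2 * i) + θ (j + 1) (2 * i + 1) = θ j i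

end DyadicTree

section Potential

/-- The logarithm of the larger distance from `w` to an end of the cell `i` of level `j`. -/
def cellLog (j i : ℕ) (w : ℂ) : ℝ :=
  Real.log (max ‖w - (i / 2 ^ j : ℝ)‖ ‖w - ((i + 1) / 2 ^ j : ℝ)‖)

theorem sub_cell_ends_ne (j i : ℕ) (w : ℂ) :
    w - (i / 2 ^ j : ℝ) ≠ w - ((i + 1) / 2 ^ j : ℝ) := by
  simp [div_left_inj']

theorem max_norm_pos_of_ne {E : Type*} [NormedAddCommGroup E] {x y : E} (h : x ≠ y) :
    0 < max ‖x‖ ‖y‖ := by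
  refine lt_of_not_ge fun hle => h ?_
  rw [max_le_iff, norm_le_zero_iff, norm_le_zero_iff] at hle
  rw [hle.1, hle.2]

theorem continuous_cellLog (j i : ℕ) : Continuous (cellLog j i) :=
  Continuous.log (by fun_prop) fun w => (max_norm_pos_of_ne (sub_cell_ends_ne j i w)).ne'

theorem norm_sub_cell_midpoint_le (j i : ℕ) (w : ℂ) :
    ‖w - ((2 * i + 1) / 2 ^ (j + 1) : ℝ)‖ ≤
      max ‖w - (i / 2 ^ j : ℝ)‖ ‖w - ((i + 1) / 2 ^ j : ℝ)‖ := by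
  refine (convexOn_norm convex_univ).le_max_of_mem_segment (Set.mem_univ _) (Set.mem_univ _)
    ⟨1 / 2, 1 / 2, by norm_num, by norm_num, by norm_num, ?_⟩
  simp only [Complex.real_smul]
  push_cast
  field_simp
  ring

theorem cellLog_two_mul_le (j i : ℕ) (w : ℂ) : cellLog (j + 1) (2 * i) w ≤ cellLog j i w := by
  have left_end : ((2 * i : ℕ) : ℝ) / 2 ^ (j + 1) = i / 2 ^ j := by
    push_cast
    field_simp
    ring
  refine Real.log_le_log (max_norm_pos_of_ne (sub_cell_ends_ne _ _ w)) (max_le ?_ ?_)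
  · rw [left_end]
    exact le_max_left _ _
  · rw [Nat.cast_mul, Nat.cast_ofNat]
    exact norm_sub_cell_midpoint_le j i w

theorem cellLog_two_mul_add_one_le (j i : ℕ) (w : ℂ) :
    cellLog (j + 1) (2 * i + 1) w ≤ cellLog j i w := by
  have right_end : (((2 * i + 1 : ℕ) : ℝ) + 1) / 2 ^ (j + 1) = (i + 1) / 2 ^ j := by
    push_cast
    field_simp
    ring
  refine Real.log_le_log (max_norm_pos_of_ne (sub_cell_ends_ne _ _ w)) (max_le ?_ ?_)
  · rw [Nat.cast_add, Nat.cast_mul, Nat.cast_one, Nat.cast_ofNat]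
    exact norm_sub_cell_midpoint_le j i w
  · rw [right_end]
    exact le_max_right _ _

theorem cellLog_dyadicNode_le (j : ℕ) {y : ℝ} (hy : 0 ≤ y) :
    cellLog j (dyadicNode j y) y ≤ -(j * Real.log 2) := by
  have hle : (dyadicNode j y : ℝ) ≤ 2 ^ j * y := Nat.floor_le (by positivity)
  have hlt : 2 ^ j * y < dyadicNode j y + 1 := Nat.lt_floor_add_one _
  rw [← Real.log_pow, ← Real.log_inv]
  refine Real.log_le_log (max_norm_pos_of_ne (sub_cell_ends_ne _ _ _)) (max_le ?_ ?_)
  all_goals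
    rw [← Complex.ofReal_sub, Complex.norm_real, Real.norm_eq_abs, abs_le]
    constructor <;> field_simp <;> linarith

theorem cellLog_nonneg {j i : ℕ} (hi : i < 2 ^ j) {w : ℂ} (hw : 2 ≤ w.re) : 0 ≤ cellLog j i w := by
  have hi' : (i : ℝ) / 2 ^ j ≤ 1 := by
    rw [div_le_one (by positivity)]
    exact_mod_cast hi.le
  refine Real.log_nonneg (le_max_of_le_left ?_)
  calc (1 : ℝ) ≤ (w - (i / 2 ^ j : ℝ)).re := by rw [Complex.sub_re, Complex.ofReal_re]; linarith
    _ ≤ _ := Complex.re_le_norm _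

theorem hasHarmonicSupportAt_cellLog (j i : ℕ) {φ : ℂ → ℂ} {z : ℂ} (hφ : AnalyticAt ℂ φ z) :
    HasHarmonicSupportAt (fun z => cellLog j i (φ z)) z :=
  hasHarmonicSupportAt_log_max_norm (hφ.sub analyticAt_const) (hφ.sub analyticAt_const)
    (sub_cell_ends_ne j i (φ z))

/-- The logarithmic potential at `w` of the part of the flow `θ` below the node `(j, i)`, with the
kernel replaced by `cellLog` on the cells `d` levels below that node. -/
def treePotential (θ : ℕ → ℕ → ℝ) : ℕ → ℕ → ℕ → ℂ → ℝ
  | 0, j, i, w => θ j i * cellLog j i w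
  | d + 1, j, i, w => treePotential θ d (j + 1) (2 * i) w + treePotential θ d (j + 1) (2 * i + 1) w

variable {θ : ℕ → ℕ → ℝ}

theorem continuous_treePotential (θ : ℕ → ℕ → ℝ) (d j i : ℕ) :
    Continuous (treePotential θ d j i) := by
  induction d generalizing j i with
  | zero => exact continuous_const.mul (continuous_cellLog j i)
  | succ d ih => exact (ih _ _).add (ih _ _)

theorem IsFlow.hasHarmonicSupportAt_treePotential (hθ : IsFlow θ) (d j i : ℕ) {φ : ℂ → ℂ} {z : ℂ}
    (hφ : AnalyticAt ℂ φ z) : HasHarmonicSupportAt (fun z => treePotential θ d j i (φ z)) z := by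
  induction d generalizing j i with
  | zero => exact (hasHarmonicSupportAt_cellLog j i hφ).const_mul (hθ.nonneg j i)
  | succ d ih => exact (ih _ _).add (ih _ _)

theorem IsFlow.treePotential_nonneg (hθ : IsFlow θ) (d : ℕ) {j i : ℕ} (hi : i < 2 ^ j) {w : ℂ}
    (hw : 2 ≤ w.re) : 0 ≤ treePotential θ d j i w := by
  induction d generalizing j i with
  | zero => exact mul_nonneg (hθ.nonneg j i) (cellLog_nonneg hi hw)
  | succ d ih => exact add_nonneg (ih (by grind)) (ih (by grind))

theorem IsFlow.treePotential_succ_le (hθ : IsFlow θ) (d j i : ℕ) (w : ℂ) :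
    treePotential θ (d + 1) j i w ≤ treePotential θ d j i w := by
  induction d generalizing j i with
  | zero =>
    calc θ (j + 1) (2 * i) * cellLog (j + 1) (2 * i) w +
          θ (j + 1) (2 * i + 1) * cellLog (j + 1) (2 * i + 1) w
        ≤ θ (j + 1) (2 * i) * cellLog j i w + θ (j + 1) (2 * i + 1) * cellLog j i w :=
          add_le_add (mul_le_mul_of_nonneg_left (cellLog_two_mul_le j i w) (hθ.nonneg _ _))
            (mul_le_mul_of_nonneg_left (cellLog_two_mul_add_one_le j i w) (hθ.nonneg _ _))
      _ = θ j i * cellLog j i w := by rw [← add_mul, hθ.split]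
  | succ d ih => exact add_le_add (ih _ _) (ih _ _)

theorem IsFlow.treePotential_antitone (hθ : IsFlow θ) (j i : ℕ) (w : ℂ) :
    Antitone fun d => treePotential θ d j i w :=
  antitone_nat_of_succ_le fun d => hθ.treePotential_succ_le d j i w

theorem IsFlow.treePotential_dyadicNode_le (hθ : IsFlow θ) (d j : ℕ) {y : ℝ} (hy : 0 ≤ y) :
    treePotential θ d j (dyadicNode j y) y ≤ -Real.log 2 *
      (j * θ j (dyadicNode j y) +
        ∑ l ∈ Finset.range d, θ (j + 1 + l) (dyadicNode (j + 1 + l) y)) := by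
  induction d generalizing j with
  | zero =>
    have := mul_le_mul_of_nonneg_left (cellLog_dyadicNode_le j hy) (hθ.nonneg j (dyadicNode j y))
    simp only [treePotential, Finset.range_zero, Finset.sum_empty]
    linarith
  | succ d ih =>
    have branch := ih (j + 1)
    have sum_eq : ∑ l ∈ Finset.range (d + 1), θ (j + 1 + l) (dyadicNode (j + 1 + l) y) =
        θ (j + 1) (dyadicNode (j + 1) y) +
          ∑ l ∈ Finset.range d, θ (j + 1 + 1 + l) (dyadicNode (j + 1 + 1 + l) y) := by
      rw [Finset.sum_range_succ', add_comm]
      simp only [add_assoc, add_comm 1]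
    have sibling : ∀ i, cellLog (j + 1) i y ≤ cellLog j (dyadicNode j y) y →
        treePotential θ d (j + 1) i y ≤ -(j * Real.log 2) * θ (j + 1) i := fun i hi => by
      calc treePotential θ d (j + 1) i y ≤ θ (j + 1) i * cellLog (j + 1) i y :=
            hθ.treePotential_antitone (j + 1) i y (Nat.zero_le d)
        _ ≤ θ (j + 1) i * -(j * Real.log 2) :=
            mul_le_mul_of_nonneg_left (hi.trans (cellLog_dyadicNode_le j hy)) (hθ.nonneg _ _)
        _ = _ := mul_comm _ _
    rw [sum_eq, ← hθ.split j (dyadicNode j y)]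
    simp only [treePotential]
    push_cast at branch
    rcases dyadicNode_succ_eq j y with hi | hi <;> rw [hi] at branch ⊢
    · have := sibling _ (cellLog_two_mul_add_one_le j _ y)
      linarith
    · have := sibling _ (cellLog_two_mul_le j _ y)
      linarith

theorem IsFlow.treePotential_root_le (hθ : IsFlow θ) (d : ℕ) {y : ℝ} (hy : y ∈ Set.Ico (0 : ℝ) 1) :
    treePotential θ d 0 0 y ≤ Real.log 2 * (θ 0 0 - branchSum θ y d) := by
  have hroot := dyadicNode_zero_of_mem_Ico hy
  have hle := hθ.treePotential_dyadicNode_le d 0 hy.1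
  rw [hroot] at hle
  have hsum : branchSum θ y (d + 1) =
      ∑ l ∈ Finset.range d, θ (0 + 1 + l) (dyadicNode (0 + 1 + l) y) + θ 0 0 := by
    rw [branchSum, Finset.sum_range_succ', hroot]
    simp only [zero_add, add_comm 1]
  have hmono := branchSum_monotone hθ.nonneg y d.le_succ
  have : 0 < Real.log 2 := Real.log_pos one_lt_two
  calc _ ≤ _ := hle
    _ = Real.log 2 * (θ 0 0 - branchSum θ y (d + 1)) := by rw [hsum]; ring
    _ ≤ _ := by gcongr

theorem polarSet_of_isFlow {ι : Type*} [Fintype ι] {θ : ι → ℕ → ℕ → ℝ} (hθ : ∀ b, IsFlow (θ b))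
    {φ : ι → ℂ → ℂ} (hφ : ∀ b, Differentiable ℂ (φ b)) (hfar : ∃ z, ∀ b, 2 ≤ (φ b z).re)
    {S : Set ℂ} (hS : ∀ z ∈ S, ∃ y : ι → ℝ, (∀ b, y b ∈ Set.Ico (0 : ℝ) 1 ∧ φ b z = y b) ∧
      ∀ C, ∃ n, C < ∑ b, branchSum (θ b) (y b) n) : PolarSet S := by
  set u : ℕ → ℂ → ℝ := fun n z => ∑ b, treePotential (θ b) n 0 0 (φ b z)
  refine ⟨fun z => ⨅ n, (u n z : EReal), subharmonicFn_iInf (fun n => ?_) (fun m n hmn z => ?_)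
    fun n z => ?_, ?_, fun z hz => ?_⟩
  · exact continuous_finsetSum _ fun b _ =>
      (continuous_treePotential (θ b) n 0 0).comp (hφ b).continuous
  · exact Finset.sum_le_sum fun b _ => (hθ b).treePotential_antitone 0 0 (φ b z) hmn
  · exact HasHarmonicSupportAt.sum fun b _ =>
      (hθ b).hasHarmonicSupportAt_treePotential n 0 0 ((hφ b).analyticAt z)
  · obtain ⟨z, hz⟩ := hfar
    have hnonneg : (0 : EReal) ≤ ⨅ n, (u n z : EReal) := le_iInf fun n => EReal.coe_nonneg.2 <|
      Finset.sum_nonneg fun b _ => (hθ b).treePotential_nonneg n (by norm_num) (hz b)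
    exact ⟨z, (EReal.bot_lt_zero.trans_le hnonneg).ne'⟩
  · obtain ⟨y, hy, hunbdd⟩ := hS z hz
    have hu : ∀ n, u n z ≤ Real.log 2 * (∑ b, θ b 0 0 - ∑ b, branchSum (θ b) (y b) n) := fun n => by
      rw [← Finset.sum_sub_distrib, Finset.mul_sum]
      exact Finset.sum_le_sum fun b _ =>
        (hy b).2 ▸ (hθ b).treePotential_root_le n (hy b).1
    have hlog : 0 < Real.log 2 := Real.log_pos one_lt_two
    refine (EReal.eq_bot_iff_forall_lt _).2 fun t => ?_
    obtain ⟨n, hn⟩ := hunbdd (∑ b, θ b 0 0 - t / Real.log 2)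
    refine (iInf_le _ n).trans_lt (EReal.coe_lt_coe_iff.2 ((hu n).trans_lt ?_))
    rw [← lt_div_iff₀' hlog]
    linarith

end Potential

section Conductance

/-- The sum of the weights `g` over the strict ancestors of the node `i` of level `j`. -/
def ancestorSum (g : ℕ → ℕ → ℝ) : ℕ → ℕ → ℝ
  | 0, _ => 0
  | j + 1, i => ancestorSum g j (i / 2) + g j (i / 2)

theorem branchSum_eq_ancestorSum (g : ℕ → ℕ → ℝ) (y : ℝ) (n : ℕ) :
    branchSum g y n = ancestorSum g n (dyadicNode n y) := by
  induction n with
  | zero => rfl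
  | succ n ih => rw [branchSum_succ, ancestorSum, dyadicNode_succ_div_two, ih]

/-- The effect on the effective conductance `s` of a tree of attaching a unit resistor in series
with its root. -/
def seriesConductance (s : ℝ) : ℝ := s / (1 + s)

theorem seriesConductance_mono {s t : ℝ} (hs : 0 ≤ s) (hst : s ≤ t) :
    seriesConductance s ≤ seriesConductance t := by
  rw [seriesConductance, seriesConductance, div_le_div_iff₀ (by linarith) (by linarith)]
  linarith

theorem sq_mul_seriesConductance_le (x a : ℝ) {s : ℝ} (hs : 0 ≤ s) :
    x ^ 2 * seriesConductance s ≤ a ^ 2 + (x - a) ^ 2 * s := by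
  rw [seriesConductance, mul_div_assoc', div_le_iff₀ (by linarith)]
  nlinarith [sq_nonneg (a - (x - a) * s)]

/-- The effective conductance, with the network cut off `d` levels below, from the node `(j, i)` to
the set of nodes up to which the weights `g` sum to at least `1`. Each node carries a unit
resistor on the edge above it, and below a node of that set the network is a full binary tree,
whose conductance is `1 / 2` in this normalization. -/
def conductanceApprox (g : ℕ → ℕ → ℝ) : ℕ → ℕ → ℕ → ℝ
  | 0, j, i => if 1 ≤ ancestorSum g j i + g j i then 1 / 2 else 0
  | d + 1, j, i => seriesConductance
      (conductanceApprox g d (j + 1) (2 * i) + conductanceApprox g d (j + 1) (2 * i + 1))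

variable {g : ℕ → ℕ → ℝ}

theorem conductanceApprox_mem_Icc (g : ℕ → ℕ → ℝ) (d j i : ℕ) :
    conductanceApprox g d j i ∈ Set.Icc (0 : ℝ) (1 / 2) := by
  induction d generalizing j i with
  | zero =>
    rw [conductanceApprox]
    split_ifs <;> norm_num
  | succ d ih =>
    obtain ⟨h₀, h₀'⟩ := ih (j + 1) (2 * i)
    obtain ⟨h₁, h₁'⟩ := ih (j + 1) (2 * i + 1)
    refine ⟨div_nonneg (by linarith) (by linarith), ?_⟩
    calc _ ≤ seriesConductance 1 := seriesConductance_mono (by linarith) (by linarith)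
      _ = 1 / 2 := by norm_num [seriesConductance]

theorem conductanceApprox_le_succ (hg : ∀ j i, 0 ≤ g j i) (d j i : ℕ) :
    conductanceApprox g d j i ≤ conductanceApprox g (d + 1) j i := by
  induction d generalizing j i with
  | zero =>
    by_cases hmarked : 1 ≤ ancestorSum g j i + g j i
    · have child_marked : ∀ k, k / 2 = i → conductanceApprox g 0 (j + 1) k = 1 / 2 := fun k hk => by
        rw [conductanceApprox, ancestorSum, hk, if_pos]
        linarith [hg (j + 1) k]
      rw [conductanceApprox, conductanceApprox, child_marked _ (by omega),
        child_marked _ (by omega), if_pos hmarked]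
      norm_num [seriesConductance]
    · rw [conductanceApprox, if_neg hmarked]
      exact (conductanceApprox_mem_Icc g 1 j i).1
  | succ d ih =>
    exact seriesConductance_mono (add_nonneg (conductanceApprox_mem_Icc ..).1
      (conductanceApprox_mem_Icc ..).1) (add_le_add (ih _ _) (ih _ _))

theorem sum_range_two_mul {M : Type*} [AddCommMonoid M] (f : ℕ → M) (n : ℕ) :
    ∑ i ∈ Finset.range (2 * n), f i = ∑ i ∈ Finset.range n, (f (2 * i) + f (2 * i + 1)) := by
  induction n with
  | zero => simp
  | succ n ih => rw [mul_add_one, Finset.sum_range_succ, Finset.sum_range_succ, ih,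
      Finset.sum_range_succ, add_assoc]

/-- Dirichlet's principle for one resistor. -/
theorem sq_mul_conductanceApprox_succ_le (g : ℕ → ℕ → ℝ) (d j i : ℕ) :
    (max (1 - ancestorSum g j i) 0) ^ 2 * conductanceApprox g (d + 1) j i ≤
      g j i ^ 2 + (max (1 - (ancestorSum g j i + g j i)) 0) ^ 2 *
        (conductanceApprox g d (j + 1) (2 * i) + conductanceApprox g d (j + 1) (2 * i + 1)) := by
  set x := max (1 - ancestorSum g j i) 0
  set x' := max (1 - (ancestorSum g j i + g j i)) 0
  have hgrad : (x - x') ^ 2 ≤ g j i ^ 2 := sq_le_sq.2 <| by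
    simpa using abs_max_sub_max_le_abs (1 - ancestorSum g j i) (1 - (ancestorSum g j i + g j i)) 0
  have hseries := sq_mul_seriesConductance_le x (x - x') (add_nonneg
    (conductanceApprox_mem_Icc g d (j + 1) (2 * i)).1
    (conductanceApprox_mem_Icc g d (j + 1) (2 * i + 1)).1)
  rw [sub_sub_cancel] at hseries
  exact hseries.trans (add_le_add_left hgrad _)

/-- Dirichlet's principle: the conductance is at most the energy of any admissible potential, here
`max (1 - ancestorSum g) 0`, whose gradient is at most `|g|`. -/
theorem sum_sq_mul_conductanceApprox_le (g : ℕ → ℕ → ℝ) (N d j : ℕ) :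
    ∑ i ∈ Finset.range (2 ^ j * N),
        (max (1 - ancestorSum g j i) 0) ^ 2 * conductanceApprox g d j i ≤
      ∑ l ∈ Finset.range (d + 1), ∑ i ∈ Finset.range (2 ^ (j + l) * N), g (j + l) i ^ 2 := by
  induction d generalizing j with
  | zero =>
    simp only [zero_add, Finset.sum_range_one, add_zero]
    refine Finset.sum_le_sum fun i _ => ?_
    rw [conductanceApprox]
    split_ifs with hmarked
    · rcases max_cases (1 - ancestorSum g j i) 0 with h | h <;> rw [h.1] <;>
        nlinarith [sq_nonneg (g j i)]
    · simpa only [mul_zero] using sq_nonneg (g j i)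
  | succ d ih =>
    calc _ ≤ ∑ i ∈ Finset.range (2 ^ j * N), (g j i ^ 2 +
          (max (1 - (ancestorSum g j i + g j i)) 0) ^ 2 *
            (conductanceApprox g d (j + 1) (2 * i) + conductanceApprox g d (j + 1) (2 * i + 1))) :=
          Finset.sum_le_sum fun i _ => sq_mul_conductanceApprox_succ_le g d j i
      _ = ∑ i ∈ Finset.range (2 ^ (j + 1) * N),
            (max (1 - ancestorSum g (j + 1) i) 0) ^ 2 * conductanceApprox g d (j + 1) i +
          ∑ i ∈ Finset.range (2 ^ j * N), g j i ^ 2 := by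
          rw [pow_succ', mul_assoc, sum_range_two_mul, ← Finset.sum_add_distrib]
          refine Finset.sum_congr rfl fun i _ => ?_
          simp only [ancestorSum, Nat.mul_div_cancel_left i two_pos,
            show (2 * i + 1) / 2 = i by omega]
          ring
      _ ≤ _ := by
          rw [Finset.sum_range_succ']
          simp only [add_zero, ← add_assoc, add_right_comm j _ 1]
          exact add_le_add_left (ih (j + 1)) _

/-- The effective conductance from the node `i` of level `j` to the set of nodes up to which the
weights `g` sum to at least `1`. -/
def conductance (g : ℕ → ℕ → ℝ) (j i : ℕ) : ℝ := ⨆ d, conductanceApprox g d j i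

theorem tendsto_conductanceApprox (hg : ∀ j i, 0 ≤ g j i) (j i : ℕ) :
    Tendsto (fun d => conductanceApprox g d j i) atTop (𝓝 (conductance g j i)) :=
  tendsto_atTop_ciSup (monotone_nat_of_le_succ fun d => conductanceApprox_le_succ hg d j i)
    ⟨1 / 2, Set.forall_mem_range.2 fun d => (conductanceApprox_mem_Icc g d j i).2⟩

theorem conductance_mem_Icc (hg : ∀ j i, 0 ≤ g j i) (j i : ℕ) :
    conductance g j i ∈ Set.Icc (0 : ℝ) (1 / 2) :=
  isClosed_Icc.mem_of_tendsto (tendsto_conductanceApprox hg j i)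
    (.of_forall fun d => conductanceApprox_mem_Icc g d j i)

theorem conductance_eq_seriesConductance (hg : ∀ j i, 0 ≤ g j i) (j i : ℕ) :
    conductance g j i =
      seriesConductance (conductance g (j + 1) (2 * i) + conductance g (j + 1) (2 * i + 1)) := by
  have hsum := (tendsto_conductanceApprox hg (j + 1) (2 * i)).add
    (tendsto_conductanceApprox hg (j + 1) (2 * i + 1))
  have hpos : 1 + (conductance g (j + 1) (2 * i) + conductance g (j + 1) (2 * i + 1)) ≠ 0 := by
    have h₀ := (conductance_mem_Icc hg (j + 1) (2 * i)).1
    have h₁ := (conductance_mem_Icc hg (j + 1) (2 * i + 1)).1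
    positivity
  exact tendsto_nhds_unique ((tendsto_conductanceApprox hg j i).comp (tendsto_add_atTop_nat 1))
    (hsum.div (tendsto_const_nhds.add hsum) hpos)

theorem conductance_eq_half (hg : ∀ j i, 0 ≤ g j i) {j i : ℕ}
    (h : 1 ≤ ancestorSum g j i + g j i) : conductance g j i = 1 / 2 := by
  refine le_antisymm (conductance_mem_Icc hg j i).2 ?_
  calc (1 / 2 : ℝ) = conductanceApprox g 0 j i := by rw [conductanceApprox, if_pos h]
    _ ≤ conductance g j i := le_ciSup (f := fun d => conductanceApprox g d j i)
      ⟨1 / 2, Set.forall_mem_range.2 fun d => (conductanceApprox_mem_Icc g d j i).2⟩ 0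

theorem conductance_root_le (hg : ∀ j i, 0 ≤ g j i) {E : ℝ}
    (hE : ∀ s : Finset (ℕ × ℕ), ∑ x ∈ s, g x.1 x.2 ^ 2 ≤ E) (k : ℕ) : conductance g 0 k ≤ E := by
  refine le_of_tendsto (tendsto_conductanceApprox hg 0 k) (.of_forall fun d => ?_)
  calc conductanceApprox g d 0 k
      ≤ ∑ i ∈ Finset.range (2 ^ 0 * (k + 1)),
          (max (1 - ancestorSum g 0 i) 0) ^ 2 * conductanceApprox g d 0 i := by
        simp only [ancestorSum, sub_zero, zero_le_one, sup_of_le_left, one_pow, one_mul, pow_zero]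
        exact Finset.single_le_sum (fun i _ => (conductanceApprox_mem_Icc g d 0 i).1)
          (Finset.self_mem_range_succ k)
    _ ≤ ∑ l ∈ Finset.range (d + 1), ∑ i ∈ Finset.range (2 ^ (0 + l) * (k + 1)), g (0 + l) i ^ 2 :=
        sum_sq_mul_conductanceApprox_le g (k + 1) d 0
    _ ≤ ∑ l ∈ Finset.range (d + 1), ∑ i ∈ Finset.range (2 ^ d * (k + 1)), g l i ^ 2 := by
        simp only [zero_add]
        gcongr with l hl
        · norm_num
        · exact Finset.mem_range_succ_iff.1 hl
    _ = ∑ x ∈ Finset.range (d + 1) ×ˢ Finset.range (2 ^ d * (k + 1)), g x.1 x.2 ^ 2 :=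
        (Finset.sum_product _ _ fun x : ℕ × ℕ => g x.1 x.2 ^ 2).symm
    _ ≤ E := hE _

/-- The voltage at the top of the node `i` of level `j` when the roots are held at voltage `1` and
the nodes up to which the weights `g` sum to at least `1` are grounded. -/
def voltage (g : ℕ → ℕ → ℝ) : ℕ → ℕ → ℝ
  | 0, _ => 1
  | j + 1, i => voltage g j (i / 2) * (1 - conductance g j (i / 2))

/-- The current through the node `i` of level `j` under the voltage `voltage g`. -/
def current (g : ℕ → ℕ → ℝ) (j i : ℕ) : ℝ := voltage g j i * conductance g j i

theorem voltage_mem_Icc (hg : ∀ j i, 0 ≤ g j i) (j i : ℕ) : voltage g j i ∈ Set.Icc (0 : ℝ) 1 := by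
  induction j generalizing i with
  | zero => exact ⟨zero_le_one, le_rfl⟩
  | succ j ih =>
    obtain ⟨hc₀, hc₁⟩ := conductance_mem_Icc hg j (i / 2)
    exact unitInterval.mul_mem (ih (i / 2)) ⟨by linarith, by linarith⟩

theorem isFlow_current (hg : ∀ j i, 0 ≤ g j i) : IsFlow (current g) where
  nonneg j i := mul_nonneg (voltage_mem_Icc hg j i).1 (conductance_mem_Icc hg j i).1
  split j i := by
    have h₀ := (conductance_mem_Icc hg (j + 1) (2 * i)).1
    have h₁ := (conductance_mem_Icc hg (j + 1) (2 * i + 1)).1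
    simp only [current, voltage, Nat.mul_div_cancel_left i two_pos,
      show (2 * i + 1) / 2 = i by omega, conductance_eq_seriesConductance hg j i, seriesConductance]
    field_simp
    ring

theorem ancestorSum_current (g : ℕ → ℕ → ℝ) (j i : ℕ) :
    ancestorSum (current g) j i = 1 - voltage g j i := by
  induction j generalizing i with
  | zero => simp [ancestorSum, voltage]
  | succ j ih =>
    rw [ancestorSum, ih, current, voltage]
    ring

theorem half_le_branchSum_current (hg : ∀ j i, 0 ≤ g j i) {y : ℝ} {n : ℕ}
    (h : 1 ≤ branchSum g y n) : 1 / 2 ≤ branchSum (current g) y n := by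
  obtain _ | n := n
  · norm_num [branchSum] at h
  rw [branchSum_succ, branchSum_eq_ancestorSum] at h ⊢
  rw [ancestorSum_current, current, conductance_eq_half hg h]
  linarith [(voltage_mem_Icc hg n (dyadicNode n y)).2]

end Conductance

section FlowSum

theorem IsFlow.le_of_root_le {θ : ℕ → ℕ → ℝ} (hθ : IsFlow θ) {C : ℝ} (hC : ∀ i, θ 0 i ≤ C)
    (j i : ℕ) : θ j i ≤ C := by
  induction j generalizing i with
  | zero => exact hC i
  | succ j ih =>
    have hsplit := hθ.split j (i / 2)
    have h₀ := hθ.nonneg (j + 1) (2 * (i / 2))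
    have h₁ := hθ.nonneg (j + 1) (2 * (i / 2) + 1)
    have hparent := ih (i / 2)
    rcases (by omega : i = 2 * (i / 2) ∨ i = 2 * (i / 2) + 1) with hi | hi <;> rw [hi] <;> linarith

variable {θ : ℕ → ℕ → ℕ → ℝ}

theorem isFlow_tsum (hθ : ∀ r, IsFlow (θ r)) (hsum : ∀ j i, Summable fun r => θ r j i) :
    IsFlow fun j i => ∑' r, θ r j i where
  nonneg j i := tsum_nonneg fun r => (hθ r).nonneg j i
  split j i := by
    rw [← (hsum _ _).tsum_add (hsum _ _)]
    exact tsum_congr fun r => (hθ r).split j i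

theorem sum_branchSum_le_branchSum_tsum (hθ : ∀ r, IsFlow (θ r))
    (hsum : ∀ j i, Summable fun r => θ r j i) (s : Finset ℕ) (y : ℝ) (n : ℕ) :
    ∑ r ∈ s, branchSum (θ r) y n ≤ branchSum (fun j i => ∑' r, θ r j i) y n := by
  simp only [branchSum]
  rw [Finset.sum_comm]
  exact Finset.sum_le_sum fun j _ =>
    (hsum _ _).sum_le_tsum s fun r _ => (hθ r).nonneg _ _

end FlowSum

section Mazur

theorem exists_mem_forall_norm_sub_sq_le {H : Type*} [NormedAddCommGroup H]
    [InnerProductSpace ℝ H] [CompleteSpace H] {K : Set H} (hclosed : IsClosed K)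
    (hconv : Convex ℝ K) {C : ℝ} (hne : ∃ x ∈ K, ‖x‖ ≤ C) :
    ∃ p ∈ K, ‖p‖ ≤ C ∧ ∀ x ∈ K, ‖x - p‖ ^ 2 ≤ ‖x‖ ^ 2 - ‖p‖ ^ 2 := by
  obtain ⟨x₀, hx₀, hx₀C⟩ := hne
  obtain ⟨p, hp, hmin⟩ :=
    exists_norm_eq_iInf_of_complete_convex ⟨x₀, hx₀⟩ hclosed.isComplete hconv 0
  have hinner := (norm_eq_iInf_iff_real_inner_le_zero hconv hp).1 hmin
  have hpyth : ∀ x ∈ K, ‖x - p‖ ^ 2 ≤ ‖x‖ ^ 2 - ‖p‖ ^ 2 := fun x hx => by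
    have := hinner x hx
    rw [zero_sub, inner_neg_left, inner_sub_right, real_inner_self_eq_norm_sq] at this
    rw [norm_sub_sq_real, real_inner_comm]
    linarith
  refine ⟨p, hp, (abs_le_of_sq_le_sq' ?_ ((norm_nonneg _).trans hx₀C)).2, hpyth⟩
  nlinarith [hpyth x₀ hx₀, sq_nonneg ‖x₀ - p‖, norm_nonneg x₀]

/-- The points of least norm form a Cauchy sequence. -/
theorem exists_forall_mem_of_antitone_convex {H : Type*} [NormedAddCommGroup H]
    [InnerProductSpace ℝ H] [CompleteSpace H] {K : ℕ → Set H} (hanti : Antitone K)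
    (hclosed : ∀ n, IsClosed (K n)) (hconv : ∀ n, Convex ℝ (K n)) {C : ℝ}
    (hne : ∀ n, ∃ x ∈ K n, ‖x‖ ≤ C) : ∃ p, ‖p‖ ≤ C ∧ ∀ n, p ∈ K n := by
  choose p hpK hpC hp using fun n =>
    exists_mem_forall_norm_sub_sq_le (hclosed n) (hconv n) (hne n)
  have hle : ∀ m n, m ≤ n → ‖p n - p m‖ ^ 2 ≤ ‖p n‖ ^ 2 - ‖p m‖ ^ 2 := fun m n hmn =>
    hp m (p n) (hanti hmn (hpK n))
  have hmono : Monotone fun n => ‖p n‖ ^ 2 := fun m n hmn =>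
    sub_nonneg.1 ((sq_nonneg _).trans (hle m n hmn))
  have hbdd : BddAbove (Set.range fun n => ‖p n‖ ^ 2) :=
    ⟨C ^ 2, Set.forall_mem_range.2 fun n => pow_le_pow_left₀ (norm_nonneg _) (hpC n) 2⟩
  set L := ⨆ n, ‖p n‖ ^ 2
  have hlim : Tendsto (fun n => √(L - ‖p n‖ ^ 2)) atTop (𝓝 0) := by
    simpa [L] using ((tendsto_const_nhds (x := L)).sub (tendsto_atTop_ciSup hmono hbdd)).sqrt
  have hcauchy : CauchySeq p := cauchySeq_of_le_tendsto_0' _ (fun m n hmn => by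
    rw [dist_comm, dist_eq_norm]
    exact Real.le_sqrt_of_sq_le ((hle m n hmn).trans (sub_le_sub_right (le_ciSup hbdd n) _))) hlim
  obtain ⟨q, hq⟩ := cauchySeq_tendsto_of_complete hcauchy
  exact ⟨q, le_of_tendsto hq.norm (.of_forall hpC), fun n => (hclosed n).mem_of_tendsto hq
    ((eventually_ge_atTop n).mono fun m hnm => hanti hnm (hpK m))⟩

theorem exists_lp_forall_abs_add_abs_le {α : Type*} {p : ENNReal} [Fact (1 ≤ p)]
    (u₀ : lp (fun _ : α => ℝ) p) (u : ℕ → lp (fun _ : α => ℝ) p) {B : ℝ}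
    {b : ℕ → ℝ} (hb : HasSum b B) (hu : ∀ n, ‖u n‖ ≤ b n) :
    ∃ G : lp (fun _ : α => ℝ) p, ‖G‖ ≤ ‖u₀‖ + B ∧ ∀ n i, |u₀ i| + |u n i| ≤ G i := by
  have hsum : Summable fun n => (lp.toNorm (u n)) :=
    .of_norm_bounded hb.summable fun n => lp.norm_toNorm.trans_le (hu n)
  refine ⟨lp.toNorm u₀ + ∑' n, lp.toNorm (u n), (norm_add_le _ _).trans (add_le_add
    lp.norm_toNorm.le (tsum_of_norm_bounded hb fun n => lp.norm_toNorm.trans_le (hu n))),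
    fun n i => add_le_add_right ?_ _⟩
  have heval := hsum.hasSum.mapL (lp.evalCLM ℝ (fun _ : α => ℝ) p i)
  exact le_hasSum heval n fun m _ => abs_nonneg (u m i)

/-- Mazur's lemma gives convex combinations of the tails that converge in norm, and along a fast
convergent sequence these have a common majorant. -/
theorem exists_lp_forall_exists_mem_convexHull_le {α : Type*} {f : ℕ → lp (fun _ : α => ℝ) 2}
    {C : ℝ} (hC : 0 < C) (hf : ∀ k, ‖f k‖ ≤ C) :
    ∃ G : lp (fun _ : α => ℝ) 2, ‖G‖ ≤ 2 * C ∧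
      ∀ N, ∃ h ∈ convexHull ℝ (f '' Set.Ici N), ∀ i, |h i| ≤ G i := by
  obtain ⟨p, hpC, hp⟩ := exists_forall_mem_of_antitone_convex
    (K := fun N => closure (convexHull ℝ (f '' Set.Ici N))) (C := C)
    (fun m n hmn => closure_mono (convexHull_mono (Set.image_mono (Set.Ici_subset_Ici.2 hmn))))
    (fun N => isClosed_closure) (fun N => (convex_convexHull ℝ _).closure)
    (fun N => ⟨f N, subset_closure (subset_convexHull ℝ _ ⟨N, Set.self_mem_Ici, rfl⟩), hf N⟩)
  choose h hh hdist using fun N => Metric.mem_closure_iff.1 (hp N) (C / 2 / 2 ^ N) (by positivity)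
  obtain ⟨G, hG, hle⟩ := exists_lp_forall_abs_add_abs_le p (fun N => h N - p)
    (hasSum_geometric_two' C) fun N => by rw [← dist_eq_norm, dist_comm]; exact (hdist N).le
  refine ⟨G, hG.trans (by linarith), fun N => ⟨h N, hh N, fun i => ?_⟩⟩
  calc |h N i| = |p i + (h N - p) i| := by simp
    _ ≤ |p i| + |(h N - p) i| := abs_add_le _ _
    _ ≤ G i := hle N i

end Mazur

section FlowsFromSquareSummable

variable {ι : Type*} [Fintype ι]

theorem convex_setOf_eventually_one_le_branchSum (y : ι → ℝ) :
    Convex ℝ {f : lp (fun _ : ι × ℕ × ℕ => ℝ) 2 |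
      ∀ᶠ n in atTop, 1 ≤ ∑ b, branchSum (fun j i => f (b, j, i)) (y b) n} := by
  intro f hf g hg s t hs ht hst
  filter_upwards [hf, hg] with n hfn hgn
  have hlinear : ∑ b, branchSum (fun j i => (s • f + t • g) (b, j, i)) (y b) n =
      s * ∑ b, branchSum (fun j i => f (b, j, i)) (y b) n +
        t * ∑ b, branchSum (fun j i => g (b, j, i)) (y b) n := by
    simp only [branchSum, lp.coeFn_add, lp.coeFn_smul, Pi.add_apply, Pi.smul_apply, smul_eq_mul,
      Finset.sum_add_distrib, Finset.mul_sum]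
  rw [hlinear]
  nlinarith

theorem sum_sq_le_of_norm_le {α : Type*} {G : lp (fun _ : α => ℝ) 2} {C : ℝ} (hG : ‖G‖ ≤ C)
    (s : Finset α) : ∑ x ∈ s, G x ^ 2 ≤ C ^ 2 := by
  have hle := lp.sum_rpow_le_norm_rpow (by norm_num) G s
  simp only [ENNReal.toReal_ofNat, Real.rpow_ofNat, Real.norm_eq_abs, sq_abs] at hle
  exact hle.trans (by gcongr)

theorem exists_isFlow_of_norm_le {f : ℕ → lp (fun _ : ι × ℕ × ℕ => ℝ) 2} {C : ℝ} (hC : 0 < C)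
    (hf : ∀ k, ‖f k‖ ≤ C) : ∃ θ : ι → ℕ → ℕ → ℝ, (∀ b, IsFlow (θ b)) ∧
      (∀ b i, θ b 0 i ≤ (Fintype.card ι * (2 * C)) ^ 2) ∧ ∀ y : ι → ℝ,
      (∀ᶠ k in atTop, ∀ᶠ n in atTop, 1 ≤ ∑ b, branchSum (fun j i => f k (b, j, i)) (y b) n) →
      ∀ᶠ n in atTop, 1 / 2 ≤ ∑ b, branchSum (θ b) (y b) n := by
  obtain ⟨G, hG, hhull⟩ := exists_lp_forall_exists_mem_convexHull_le hC hf
  set g : ι → ℕ → ℕ → ℝ := fun b j i => Fintype.card ι * G (b, j, i) with hg_def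
  have hG_nonneg : ∀ x, 0 ≤ G x := fun x => by
    obtain ⟨h, -, hle⟩ := hhull 0
    exact (abs_nonneg _).trans (hle x)
  have hg : ∀ b j i, 0 ≤ g b j i := fun b j i => mul_nonneg (Nat.cast_nonneg _) (hG_nonneg _)
  have henergy : ∀ b (s : Finset (ℕ × ℕ)),
      ∑ x ∈ s, g b x.1 x.2 ^ 2 ≤ (Fintype.card ι * (2 * C)) ^ 2 := fun b s => by
    have hle := sum_sq_le_of_norm_le hG (s.map ⟨Prod.mk b, Prod.mk_right_injective b⟩)
    simp only [Finset.sum_map, Function.Embedding.coeFn_mk] at hle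
    simp only [hg_def, mul_pow _ _ 2, ← Finset.mul_sum]
    exact mul_le_mul_of_nonneg_left (by simpa only [mul_pow] using hle) (sq_nonneg _)
  have hflow : ∀ b, IsFlow (current (g b)) := fun b => isFlow_current (hg b)
  refine ⟨fun b => current (g b), hflow, fun b i => ?_, fun y hy => ?_⟩
  · simpa only [current, voltage, one_mul] using conductance_root_le (hg b) (henergy b) i
  · obtain ⟨N, hN⟩ := eventually_atTop.1 hy
    obtain ⟨h, hh, hle⟩ := hhull N
    have hh_one : ∀ᶠ n in atTop, 1 ≤ ∑ b, branchSum (fun j i => h (b, j, i)) (y b) n :=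
      (convex_setOf_eventually_one_le_branchSum y).convexHull_subset_iff.2
        (Set.image_subset_iff.2 fun k hk => hN k hk) hh
    filter_upwards [hh_one] with n hn
    have hsum_one : 1 ≤ ∑ b, branchSum (fun j i => G (b, j, i)) (y b) n :=
      hn.trans <| Finset.sum_le_sum fun b _ => Finset.sum_le_sum fun j _ =>
        (le_abs_self _).trans (hle _)
    obtain ⟨b, hb⟩ : ∃ b, 1 ≤ branchSum (g b) (y b) n := by
      have hι : (Finset.univ : Finset ι).Nonempty :=
        Finset.nonempty_of_sum_ne_zero (zero_lt_one.trans_le hsum_one).ne'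
      obtain ⟨b, -, hb⟩ := Finset.exists_le_of_sum_le (f := fun _ : ι => (1 : ℝ))
        (g := fun b => branchSum (g b) (y b) n) hι <| by
          simp only [branchSum, hg_def, ← Finset.mul_sum, Finset.sum_const, Finset.card_univ,
            nsmul_eq_mul] at hsum_one ⊢
          gcongr
      exact ⟨b, hb⟩
    exact (half_le_branchSum_current (hg b) hb).trans <|
      Finset.single_le_sum (f := fun b => branchSum (current (g b)) (y b) n)
        (fun b _ => Finset.sum_nonneg fun j _ => (hflow b).nonneg _ _) (Finset.mem_univ b)

theorem exists_isFlow_forall_lt_sum_branchSum {θ : ℕ → ι → ℕ → ℕ → ℝ}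
    (hθ : ∀ r b, IsFlow (θ r b)) {C : ℕ → ℝ} (hC : Summable C) (hroot : ∀ r b i, θ r b 0 i ≤ C r) :
    ∃ Θ : ι → ℕ → ℕ → ℝ, (∀ b, IsFlow (Θ b)) ∧ ∀ y : ι → ℝ,
      (∀ r, ∀ᶠ n in atTop, 1 / 2 ≤ ∑ b, branchSum (θ r b) (y b) n) →
      ∀ B, ∃ n, B < ∑ b, branchSum (Θ b) (y b) n := by
  have hsum : ∀ b j i, Summable fun r => θ r b j i := fun b j i =>
    hC.of_nonneg_of_le (fun r => (hθ r b).nonneg j i) fun r =>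
      (hθ r b).le_of_root_le (hroot r b) j i
  refine ⟨fun b j i => ∑' r, θ r b j i, fun b => isFlow_tsum (fun r => hθ r b) (hsum b),
    fun y hy B => ?_⟩
  obtain ⟨R, hR⟩ := exists_nat_gt (2 * B)
  obtain ⟨n, hn⟩ := ((Finset.range R).eventually_all.2 fun r _ => hy r).exists
  refine ⟨n, ?_⟩
  calc B < ∑ r ∈ Finset.range R, (1 / 2 : ℝ) := by
        rw [Finset.sum_const, Finset.card_range, nsmul_eq_mul]
        linarith
    _ ≤ ∑ r ∈ Finset.range R, ∑ b, branchSum (θ r b) (y b) n := Finset.sum_le_sum hn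
    _ = ∑ b, ∑ r ∈ Finset.range R, branchSum (θ r b) (y b) n := Finset.sum_comm
    _ ≤ _ := Finset.sum_le_sum fun b _ =>
        sum_branchSum_le_branchSum_tsum (fun r => hθ r b) (hsum b) _ (y b) n

end FlowsFromSquareSummable

section Truncation

/-- The increments of the sums of `g` along the branches, with these sums cut off at `T` and
rescaled by `T`. -/
def truncatedWeight (T : ℝ) (g : ℕ → ℕ → ℝ) (j i : ℕ) : ℝ :=
  (min T (ancestorSum g j i + g j i) - min T (ancestorSum g j i)) / T

variable {T : ℝ} {g : ℕ → ℕ → ℝ}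

theorem branchSum_truncatedWeight (hT : 0 ≤ T) (g : ℕ → ℕ → ℝ) (y : ℝ) (n : ℕ) :
    branchSum (truncatedWeight T g) y n = min T (branchSum g y n) / T := by
  induction n with
  | zero => simp [branchSum, hT]
  | succ n ih =>
    rw [branchSum_succ, ih, truncatedWeight, branchSum_succ, branchSum_eq_ancestorSum g]
    ring

theorem branchSum_truncatedWeight_le_one (hT : 0 ≤ T) (g : ℕ → ℕ → ℝ) (y : ℝ) (n : ℕ) :
    branchSum (truncatedWeight T g) y n ≤ 1 := by
  rw [branchSum_truncatedWeight hT]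
  exact div_le_one_of_le₀ (min_le_left _ _) hT

theorem truncatedWeight_nonneg (hT : 0 ≤ T) (hg : ∀ j i, 0 ≤ g j i) (j i : ℕ) :
    0 ≤ truncatedWeight T g j i :=
  div_nonneg (sub_nonneg.2 (min_le_min_left _ (le_add_of_nonneg_right (hg j i)))) hT

theorem truncatedWeight_le_div (hT : 0 ≤ T) (hg : ∀ j i, 0 ≤ g j i) (j i : ℕ) :
    truncatedWeight T g j i ≤ g j i / T := by
  refine div_le_div_of_nonneg_right ?_ hT
  rcases min_cases T (ancestorSum g j i) with h | h <;>
    linarith [hg j i, min_le_right T (ancestorSum g j i + g j i),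
      min_le_left T (ancestorSum g j i + g j i)]

theorem one_le_sum_branchSum_truncatedWeight {ι : Type*} [Fintype ι] [Nonempty ι] (hT : 0 < T)
    {G : ι → ℕ → ℕ → ℝ} (hG : ∀ b j i, 0 ≤ G b j i) {y : ι → ℝ} {n : ℕ}
    (h : Fintype.card ι * T ≤ ∑ b, branchSum (G b) (y b) n) :
    1 ≤ ∑ b, branchSum (truncatedWeight T (G b)) (y b) n := by
  obtain ⟨b, -, hb⟩ := Finset.exists_le_of_sum_le (f := fun _ : ι => T)
    (g := fun b => branchSum (G b) (y b) n) Finset.univ_nonempty (by simpa using h)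
  calc (1 : ℝ) = branchSum (truncatedWeight T (G b)) (y b) n := by
        rw [branchSum_truncatedWeight hT.le, min_eq_left hb, div_self hT.ne']
    _ ≤ _ := Finset.single_le_sum (f := fun b => branchSum (truncatedWeight T (G b)) (y b) n)
        (fun b _ => Finset.sum_nonneg fun j _ => truncatedWeight_nonneg hT.le (hG b) _ _)
        (Finset.mem_univ b)

end Truncation

section NodeCount

/-- The number of levels below `n` on which the branches of `y` and `t` share their node. -/
def commonDepth (y t : ℝ) (n : ℕ) : ℕ :=
  {l ∈ Finset.range n | dyadicNode l t = dyadicNode l y}.card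

variable {κ : Type*} [Fintype κ]

/-- The number of points of the family `t` whose branch passes through the node `i` of level
`j`. -/
def nodeCount (t : κ → ℝ) (j i : ℕ) : ℝ :=
  (Finset.univ.filter fun r => dyadicNode j (t r) = i).card

theorem nodeCount_nonneg (t : κ → ℝ) (j i : ℕ) : 0 ≤ nodeCount t j i := Nat.cast_nonneg _

theorem branchSum_nodeCount (t : κ → ℝ) (y : ℝ) (n : ℕ) :
    branchSum (nodeCount t) y n = ∑ r, (commonDepth y (t r) n : ℝ) := by
  simp only [branchSum, nodeCount, commonDepth, Finset.card_filter, Nat.cast_sum]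
  exact Finset.sum_comm

theorem sum_mul_nodeCount_le {w : ℕ → ℕ → ℝ} (hw : ∀ j i, 0 ≤ w j i) (t : κ → ℝ)
    {s : Finset (ℕ × ℕ)} {n : ℕ} (hs : ∀ x ∈ s, x.1 < n) :
    ∑ x ∈ s, w x.1 x.2 * nodeCount t x.1 x.2 ≤ ∑ r, branchSum w (t r) n := by
  have hbranch : ∀ r, ∑ x ∈ s with dyadicNode x.1 (t r) = x.2, w x.1 x.2 ≤
      branchSum w (t r) n := fun r => by
    calc _ ≤ ∑ x ∈ (Finset.range n).map
            ⟨fun j => (j, dyadicNode j (t r)), fun _ _ h => (Prod.ext_iff.1 h).1⟩, w x.1 x.2 :=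
          Finset.sum_le_sum_of_subset_of_nonneg (fun x hx => by
            obtain ⟨hxs, hnode⟩ := Finset.mem_filter.1 hx
            exact Finset.mem_map.2 ⟨x.1, Finset.mem_range.2 (hs x hxs), Prod.ext rfl hnode⟩)
            fun x _ _ => hw _ _
      _ = _ := Finset.sum_map _ _ _
  calc _ = ∑ r, ∑ x ∈ s with dyadicNode x.1 (t r) = x.2, w x.1 x.2 := by
        simp only [nodeCount, Finset.card_filter, Nat.cast_sum, Nat.cast_ite, Nat.cast_one,
          Nat.cast_zero, Finset.mul_sum, mul_ite, mul_one, mul_zero, Finset.sum_filter]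
        exact Finset.sum_comm
    _ ≤ _ := Finset.sum_le_sum fun r _ => hbranch r

theorem sum_sq_truncatedWeight_nodeCount_le {T : ℝ} (hT : 0 ≤ T) (t : κ → ℝ)
    (s : Finset (ℕ × ℕ)) :
    ∑ x ∈ s, truncatedWeight T (nodeCount t) x.1 x.2 ^ 2 ≤ Fintype.card κ / T := by
  set w := truncatedWeight T (nodeCount t)
  have hw : ∀ j i, 0 ≤ w j i := truncatedWeight_nonneg hT (nodeCount_nonneg t)
  obtain ⟨n, hn⟩ := (s.image Prod.fst).exists_nat_subset_range
  calc ∑ x ∈ s, w x.1 x.2 ^ 2 ≤ ∑ x ∈ s, w x.1 x.2 * nodeCount t x.1 x.2 / T :=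
        Finset.sum_le_sum fun x _ => by
          rw [sq, mul_div_assoc]
          exact mul_le_mul_of_nonneg_left (truncatedWeight_le_div hT (nodeCount_nonneg t) _ _)
            (hw _ _)
    _ = (∑ x ∈ s, w x.1 x.2 * nodeCount t x.1 x.2) / T := (Finset.sum_div _ _ _).symm
    _ ≤ (∑ r, branchSum w (t r) n) / T := by
        gcongr
        exact sum_mul_nodeCount_le hw t fun x hx =>
          Finset.mem_range.1 (hn (Finset.mem_image_of_mem _ hx))
    _ ≤ (∑ _r : κ, 1) / T := by
        gcongr
        exact branchSum_truncatedWeight_le_one hT _ _ _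
    _ = Fintype.card κ / T := by simp

end NodeCount

section ShiftedGrids

theorem floor_eq_or_floor_add_div_three_eq {u v : ℝ} (huv : |u - v| < 1 / 3) {N : ℤ}
    (hN : ¬ 3 ∣ N) : ⌊v⌋ = ⌊u⌋ ∨ ⌊v + N / 3⌋ = ⌊u + N / 3⌋ := by
  wlog hle : u ≤ v generalizing u v
  · simpa only [eq_comm] using this (abs_sub_comm u v ▸ huv) (le_of_not_ge hle)
  by_contra! hne
  have hlt := (Int.floor_mono hle).lt_of_ne' hne.1
  have hlt' := (Int.floor_mono (add_le_add_left hle (N / 3 : ℝ))).lt_of_ne' hne.2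
  -- Both `⌊v⌋` and `⌊v + N / 3⌋ - N / 3` lie in `(u, v]`, so they differ by less than `1 / 3`.
  rw [Int.floor_lt] at hlt hlt'
  have hv := Int.floor_le v
  have hv' := Int.floor_le (v + N / 3)
  rw [abs_lt] at huv
  refine hN ⟨⌊v + N / 3⌋ - ⌊v⌋, ?_⟩
  have h₀ : N < 3 * (⌊v + N / 3⌋ - ⌊v⌋) + 1 := by
    have : (N : ℝ) < 3 * (⌊v + N / 3⌋ - ⌊v⌋) + 1 := by linarith
    exact_mod_cast this
  have h₁ : 3 * (⌊v + N / 3⌋ - ⌊v⌋) < N + 1 := by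
    have : (3 : ℝ) * (⌊v + N / 3⌋ - ⌊v⌋) < N + 1 := by linarith
    exact_mod_cast this
  omega

theorem dyadicNode_eq_or_of_abs_sub_lt {j : ℕ} {y t : ℝ} (h : 3 * 2 ^ j * |y - t| < 1) :
    dyadicNode j t = dyadicNode j y ∨ dyadicNode j (t + 1 / 3) = dyadicNode j (y + 1 / 3) := by
  have hN : ¬ (3 : ℤ) ∣ 2 ^ j := fun hdvd => by
    have := Int.prime_three.dvd_of_dvd_pow hdvd
    omega
  have hclose : |2 ^ j * y - 2 ^ j * t| < 1 / 3 := by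
    rw [← mul_sub, abs_mul, abs_of_pos (by positivity)]
    linarith
  have hshift : ∀ x : ℝ, 2 ^ j * (x + 1 / 3) = 2 ^ j * x + (2 ^ j : ℤ) / 3 := fun x => by
    push_cast
    ring
  simp only [dyadicNode, hshift, ← Int.floor_toNat]
  exact (floor_eq_or_floor_add_div_three_eq hclose hN).imp (congrArg _) (congrArg _)

theorem le_commonDepth_add_or_one_le (y t : ℝ) (m : ℕ) :
    m ≤ commonDepth y t m + commonDepth (y + 1 / 3) (t + 1 / 3) m ∨
      1 ≤ 3 * 2 ^ (commonDepth y t m + commonDepth (y + 1 / 3) (t + 1 / 3) m) * |y - t| := by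
  set k := commonDepth y t m + commonDepth (y + 1 / 3) (t + 1 / 3) m
  by_contra! hfar
  have hcover : Finset.range (k + 1) ⊆
      {l ∈ Finset.range m | dyadicNode l t = dyadicNode l y} ∪
        {l ∈ Finset.range m | dyadicNode l (t + 1 / 3) = dyadicNode l (y + 1 / 3)} := fun l hl => by
    have hlk := Finset.mem_range_succ_iff.1 hl
    have hclose : 3 * 2 ^ l * |y - t| < 1 := hfar.2.trans_le' (by gcongr; norm_num)
    rw [← Finset.filter_or, Finset.mem_filter, Finset.mem_range]
    exact ⟨hlk.trans_lt hfar.1, dyadicNode_eq_or_of_abs_sub_lt hclose⟩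
  have hcard := (Finset.card_le_card hcover).trans (Finset.card_union_le _ _)
  rw [Finset.card_range] at hcard
  exact absurd hcard (by rw [← commonDepth, ← commonDepth]; omega)

/-- The position of `x` in the grid `β`: both grids place `[a, b]` inside `[0, 1)` at half its
relative scale, and they are offset by a third so that no point is near a cell end in both. -/
def gridCoord (a b : ℝ) (β : Fin 2) (x : ℝ) : ℝ := (x - a) / (2 * (b - a)) + β / 3

variable {a b : ℝ}

theorem gridCoord_mem_Ico (hab : a < b) (β : Fin 2) {x : ℝ} (hx : x ∈ Set.Icc a b) :
    gridCoord a b β x ∈ Set.Ico (0 : ℝ) 1 := by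
  have hpos : 0 < 2 * (b - a) := by linarith
  have hx₀ : 0 ≤ (x - a) / (2 * (b - a)) := div_nonneg (by linarith [hx.1]) hpos.le
  have hx₁ : (x - a) / (2 * (b - a)) ≤ 1 / 2 := by
    rw [div_le_iff₀ hpos]
    linarith [hx.2]
  rw [gridCoord]
  fin_cases β <;> norm_num <;> constructor <;> linarith

/-- The total depth to which `x` and `t` share their branches in the two grids. -/
def gridDepth (a b x t : ℝ) (m : ℕ) : ℕ :=
  ∑ β, commonDepth (gridCoord a b β x) (gridCoord a b β t) m

theorem norm_sub_le_mul_of_gridDepth_lt (hab : a < b) {x z : ℝ} (hx : x ∈ Set.Icc a b)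
    (hz : z ∈ Set.Icc a b) {r : ℂ} {m : ℕ} (hm : gridDepth a b x r.re m < m) :
    ‖(z : ℂ) - r‖ ≤ 4 * 2 ^ gridDepth a b x r.re m * ‖(x : ℂ) - r‖ := by
  have hpos : 0 < 2 * (b - a) := by linarith
  set k := gridDepth a b x r.re m with hk
  have hdepth : 1 ≤ 3 * 2 ^ k * (|x - r.re| / (2 * (b - a))) := by
    have := le_commonDepth_add_or_one_le ((x - a) / (2 * (b - a))) ((r.re - a) / (2 * (b - a))) m
    rw [← sub_div, sub_sub_sub_cancel_right, abs_div, abs_of_pos hpos] at this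
    simpa [hk, gridDepth, gridCoord, Fin.sum_univ_two] using
      this.resolve_left (by simpa [hk, gridDepth, gridCoord, Fin.sum_univ_two] using hm)
  have hre : |x - r.re| ≤ ‖(x : ℂ) - r‖ := by
    simpa using Complex.abs_re_le_norm ((x : ℂ) - r)
  have hlength : 2 * (b - a) ≤ 3 * 2 ^ k * ‖(x : ℂ) - r‖ := by
    rw [mul_div_assoc', le_div_iff₀ hpos, one_mul] at hdepth
    exact hdepth.trans (by gcongr)
  have hone : ‖(x : ℂ) - r‖ ≤ 2 ^ k * ‖(x : ℂ) - r‖ :=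
    le_mul_of_one_le_left (norm_nonneg _) (one_le_pow₀ one_le_two)
  calc ‖(z : ℂ) - r‖ ≤ ‖(z : ℂ) - x‖ + ‖(x : ℂ) - r‖ := norm_sub_le_norm_sub_add_norm_sub ..
    _ ≤ (b - a) + ‖(x : ℂ) - r‖ := by
        gcongr
        rw [← Complex.ofReal_sub, Complex.norm_real]
        exact abs_sub_le_of_le_of_le hz.1 hz.2 hx.1 hx.2
    _ ≤ 4 * 2 ^ k * ‖(x : ℂ) - r‖ := by linarith

end ShiftedGrids

section ZeroCounting

variable {a b : ℝ} {Q : Polynomial ℂ}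

theorem norm_eval_eq_mul_prod_roots (Q : Polynomial ℂ) (z : ℂ) :
    ‖Q.eval z‖ = ‖Q.leadingCoeff‖ * ∏ r : Q.roots, ‖z - r.1‖ := by
  calc ‖Q.eval z‖ = ‖Q.leadingCoeff * ∏ r : Q.roots, (z - r.1)‖ := by
        rw [(IsAlgClosed.splits Q).eval_eq_prod_roots, ← Multiset.map_univ, Finset.prod]
    _ = _ := by rw [norm_mul, norm_prod]

theorem le_sum_gridDepth (hab : a < b) {n K m : ℕ} (hdeg : Q.natDegree ≤ n) {x z : ℝ}
    (hx : x ∈ Set.Icc a b) (hz : z ∈ Set.Icc a b)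
    (hlt : ‖Q.eval (x : ℂ)‖ * (4 ^ n * 2 ^ K) < ‖Q.eval (z : ℂ)‖) (hm : K ≤ m) :
    K ≤ ∑ r : Q.roots, gridDepth a b x r.1.re m := by
  by_contra! hK
  have hdepth : ∀ r : Q.roots, gridDepth a b x r.1.re m < m := fun r =>
    (Finset.single_le_sum (fun _ _ => Nat.zero_le _) (Finset.mem_univ r)).trans_lt
      (hK.trans_le hm)
  refine hlt.not_ge ?_
  calc ‖Q.eval (z : ℂ)‖ = ‖Q.leadingCoeff‖ * ∏ r : Q.roots, ‖(z : ℂ) - r.1‖ :=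
        norm_eval_eq_mul_prod_roots Q z
    _ ≤ ‖Q.leadingCoeff‖ *
          ∏ r : Q.roots, (4 * 2 ^ gridDepth a b x r.1.re m * ‖(x : ℂ) - r.1‖) := by
        gcongr with r
        exact norm_sub_le_mul_of_gridDepth_lt hab hx hz (hdepth r)
    _ = ‖Q.eval (x : ℂ)‖ *
          (4 ^ Q.roots.card * 2 ^ ∑ r : Q.roots, gridDepth a b x r.1.re m) := by
        rw [norm_eval_eq_mul_prod_roots, Finset.prod_mul_distrib, Finset.prod_mul_distrib,
          Finset.prod_pow_eq_pow_sum, Finset.prod_const, Finset.card_univ, Multiset.card_coe]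
        ring
    _ ≤ ‖Q.eval (x : ℂ)‖ * (4 ^ n * 2 ^ K) := by
        gcongr
        · norm_num
        · exact Q.card_roots'.trans hdeg
        · norm_num

/-- The truncated zero counts of `Q` in the two grids. -/
def zeroWeight (a b T : ℝ) (Q : Polynomial ℂ) (x : Fin 2 × ℕ × ℕ) : ℝ :=
  truncatedWeight T (nodeCount fun r : Q.roots => gridCoord a b x.1 r.1.re) x.2.1 x.2.2

theorem sum_sq_zeroWeight_le (a b : ℝ) {T : ℝ} (hT : 0 ≤ T) (Q : Polynomial ℂ)
    (s : Finset (Fin 2 × ℕ × ℕ)) : ∑ x ∈ s, zeroWeight a b T Q x ^ 2 ≤ 2 * Q.natDegree / T := by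
  calc ∑ x ∈ s, zeroWeight a b T Q x ^ 2
      ≤ ∑ x ∈ Finset.univ ×ˢ s.image Prod.snd, zeroWeight a b T Q x ^ 2 :=
        Finset.sum_le_sum_of_subset_of_nonneg (fun x hx => Finset.mem_product.2
          ⟨Finset.mem_univ _, Finset.mem_image_of_mem _ hx⟩) fun _ _ _ => sq_nonneg _
    _ = ∑ β, ∑ x ∈ s.image Prod.snd, zeroWeight a b T Q (β, x) ^ 2 := Finset.sum_product _ _ _
    _ ≤ ∑ _β : Fin 2, Fintype.card Q.roots / T :=
        Finset.sum_le_sum fun β _ => sum_sq_truncatedWeight_nodeCount_le hT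
          (fun r : Q.roots => gridCoord a b β r.1.re) _
    _ ≤ 2 * Q.natDegree / T := by
        rw [Finset.sum_const, Finset.card_univ, Fintype.card_fin, Multiset.card_coe,
          nsmul_eq_mul, Nat.cast_ofNat, ← mul_div_assoc]
        gcongr
        exact Q.card_roots'

theorem eventually_one_le_sum_branchSum_zeroWeight (hab : a < b) {n M : ℕ} (hn : n ≠ 0)
    (hM : M ≠ 0) (hdeg : Q.natDegree ≤ n) {x z : ℝ} (hx : x ∈ Set.Icc a b) (hz : z ∈ Set.Icc a b)
    (hlt : ‖Q.eval (x : ℂ)‖ * (4 ^ (1 + M)) ^ n < ‖Q.eval (z : ℂ)‖) : ∀ᶠ m in atTop,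
      1 ≤ ∑ β, branchSum (fun j i => zeroWeight a b (n * M) Q (β, j, i)) (gridCoord a b β x) m := by
  have hpow : (4 : ℝ) ^ n * 2 ^ (2 * (n * M)) = (4 ^ (1 + M)) ^ n := by
    rw [pow_mul (2 : ℝ), show (2 : ℝ) ^ 2 = 4 by norm_num, ← pow_add, ← pow_mul]
    ring_nf
  filter_upwards [eventually_ge_atTop (2 * (n * M))] with m hm
  have hdepth := le_sum_gridDepth hab hdeg hx hz (by rwa [hpow]) hm
  refine one_le_sum_branchSum_truncatedWeight (by positivity)
    (G := fun β => nodeCount fun r : Q.roots => gridCoord a b β r.1.re)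
    (fun β => nodeCount_nonneg _) ?_
  simp only [branchSum_nodeCount, Fintype.card_fin]
  rw [Finset.sum_comm]
  exact_mod_cast hdepth

end ZeroCounting

section SmallRoots

theorem eventually_mul_pow_lt_one {v : ℕ → ℝ} (hv : ∀ k, 0 ≤ v k) {n : ℕ → ℕ}
    (hn : ∀ k, n k ≠ 0) (hlim : Tendsto (fun k => v k ^ (1 / (n k : ℝ))) atTop (𝓝 0)) {c : ℝ}
    (hc : 0 < c) : ∀ᶠ k in atTop, v k * c ^ n k < 1 := by
  filter_upwards [hlim.eventually_lt_const (inv_pos.2 hc)] with k hk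
  calc v k * c ^ n k = (v k ^ (1 / (n k : ℝ)) * c) ^ n k := by
        rw [mul_pow, one_div, Real.rpow_inv_natCast_pow (hv k) (hn k)]
    _ < 1 := pow_lt_one₀ (mul_nonneg (Real.rpow_nonneg (hv k) _) hc.le)
        ((lt_inv_mul_iff₀' hc).1 (by simpa using hk)) (hn k)

theorem exists_lp_coe_eq_of_sum_sq_le {α : Type*} {f : α → ℝ} {C : ℝ} (hC : 0 ≤ C)
    (hf : ∀ s : Finset α, ∑ x ∈ s, f x ^ 2 ≤ C ^ 2) :
    ∃ F : lp (fun _ : α => ℝ) 2, ⇑F = f ∧ ‖F‖ ≤ C := by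
  have hf' : ∀ s : Finset α, ∑ x ∈ s, ‖f x‖ ^ (2 : ENNReal).toReal ≤ C ^ (2 : ENNReal).toReal := by
    simpa using hf
  exact ⟨⟨f, memℓp_gen' hf'⟩, rfl, lp.norm_le_of_forall_sum_le (by norm_num) hC hf'⟩

variable {a b : ℝ} {n : ℕ → ℕ} {Q : ℕ → Polynomial ℂ}

theorem exists_isFlow_of_one_le_norm_eval (hab : a < b) (hn : ∀ k, n k ≠ 0)
    (hdeg : ∀ k, (Q k).natDegree ≤ n k)
    (hone : ∀ k, ∃ z ∈ Set.Icc a b, 1 ≤ ‖(Q k).eval (z : ℂ)‖) {C : ℝ} (hC : 0 < C) :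
    ∃ θ : Fin 2 → ℕ → ℕ → ℝ, (∀ β, IsFlow (θ β)) ∧ (∀ β i, θ β 0 i ≤ C) ∧
      ∀ x ∈ Set.Icc a b,
        Tendsto (fun k => ‖(Q k).eval (x : ℂ)‖ ^ (1 / (n k : ℝ))) atTop (𝓝 0) →
        ∀ᶠ m in atTop, 1 / 2 ≤ ∑ β, branchSum (θ β) (gridCoord a b β x) m := by
  obtain ⟨M, hM⟩ := exists_nat_gt (32 / C)
  have hM_pos : (0 : ℝ) < M := (by positivity : (0 : ℝ) < 32 / C).trans hM
  have henergy : ∀ k s, ∑ x ∈ s, zeroWeight a b (n k * M) (Q k) x ^ 2 ≤ √(2 / M) ^ 2 := by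
    intro k s
    have hnk : (0 : ℝ) < n k := Nat.cast_pos.2 (Nat.pos_of_ne_zero (hn k))
    rw [Real.sq_sqrt (by positivity)]
    calc ∑ x ∈ s, zeroWeight a b (n k * M) (Q k) x ^ 2
        ≤ 2 * (Q k).natDegree / (n k * M) := sum_sq_zeroWeight_le a b (by positivity) _ s
      _ ≤ 2 * n k / (n k * M) := by gcongr; exact hdeg k
      _ = 2 / (M : ℝ) := by field_simp
  choose f hf hf_norm using fun k => exists_lp_coe_eq_of_sum_sq_le (Real.sqrt_nonneg _) (henergy k)
  obtain ⟨θ, hflow, hroot, hlarge⟩ := exists_isFlow_of_norm_le (by positivity) hf_norm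
  refine ⟨θ, hflow, fun β i => (hroot β i).trans ?_, fun x hx hlim => hlarge _ ?_⟩
  · rw [mul_pow, mul_pow, Real.sq_sqrt (by positivity), Fintype.card_fin]
    rw [div_lt_comm₀ hC hM_pos] at hM
    calc _ = 32 / (M : ℝ) := by push_cast; ring
      _ ≤ C := hM.le
  · filter_upwards [eventually_mul_pow_lt_one (fun k => norm_nonneg _) hn hlim
      (c := 4 ^ (1 + M)) (by positivity)] with k hk
    obtain ⟨z, hz, hz_one⟩ := hone k
    simpa only [hf] using eventually_one_le_sum_branchSum_zeroWeight hab (hn k)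
      (Nat.cast_pos.1 hM_pos).ne' (hdeg k) hx hz (hk.trans_le hz_one)

theorem exists_isFlow_forall_lt_sum_branchSum_gridCoord (hab : a < b) (hn : ∀ k, n k ≠ 0)
    (hdeg : ∀ k, (Q k).natDegree ≤ n k)
    (hone : ∀ k, ∃ z ∈ Set.Icc a b, 1 ≤ ‖(Q k).eval (z : ℂ)‖) :
    ∃ Θ : Fin 2 → ℕ → ℕ → ℝ, (∀ β, IsFlow (Θ β)) ∧ ∀ x ∈ Set.Icc a b,
      Tendsto (fun k => ‖(Q k).eval (x : ℂ)‖ ^ (1 / (n k : ℝ))) atTop (𝓝 0) →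
      ∀ B, ∃ m, B < ∑ β, branchSum (Θ β) (gridCoord a b β x) m := by
  choose θ hflow hroot hlarge using fun r : ℕ =>
    exists_isFlow_of_one_le_norm_eval hab hn hdeg hone (C := (1 / 2) ^ r) (by positivity)
  obtain ⟨Θ, hΘ, hunbounded⟩ :=
    exists_isFlow_forall_lt_sum_branchSum hflow summable_geometric_two hroot
  exact ⟨Θ, hΘ, fun x hx hlim => hunbounded _ fun r => hlarge r x hx hlim⟩

end SmallRoots

theorem polar_of_sup_norm_one_general (a b : ℝ) (hab : a < b) (n : ℕ → ℕ)
    (hn : ∀ᶠ k in atTop, n k ≠ 0) (Q : ℕ → Polynomial ℂ) (hdeg : ∀ k, (Q k).natDegree ≤ n k)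
    (hone : ∀ k, ∃ z ∈ Set.Icc a b, 1 ≤ ‖(Q k).eval (z : ℂ)‖) :
    PolarSet {z : ℂ | z ∈ Complex.ofReal '' Set.Icc a b ∧
      Tendsto (fun k => ‖(Q k).eval z‖ ^ (1 / (n k : ℝ))) atTop (𝓝 0)} := by
  obtain ⟨N, hN⟩ := eventually_atTop.1 hn
  obtain ⟨Θ, hflow, hunbounded⟩ := exists_isFlow_forall_lt_sum_branchSum_gridCoord hab
    (n := fun k => n (k + N)) (Q := fun k => Q (k + N)) (fun k => hN _ (Nat.le_add_left N k))
    (fun k => hdeg _) fun k => hone _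
  have hlength : (b - a : ℂ) ≠ 0 := sub_ne_zero.2 (Complex.ofReal_injective.ne hab.ne')
  refine polarSet_of_isFlow hflow (φ := fun β z => (z - a) / (2 * (b - a)) + β / 3)
    (fun β => by fun_prop) ⟨a + 4 * (b - a), fun β => ?_⟩ ?_
  · have hfar : ((a + 4 * (b - a) : ℂ) - a) / (2 * (b - a)) + β / 3 = (2 + β / 3 : ℝ) := by
      push_cast
      field_simp
      ring
    rw [hfar, Complex.ofReal_re]
    linarith [show (0 : ℝ) ≤ β / 3 by positivity]
  · rintro _ ⟨⟨x, hx, rfl⟩, hlim⟩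
    refine ⟨fun β => gridCoord a b β x, fun β => ⟨gridCoord_mem_Ico hab β hx, ?_⟩,
      hunbounded x hx (hlim.comp (tendsto_add_atTop_nat N))⟩
    simp [gridCoord]

/-- If `(q_{n_k})` are polynomials with `deg q_{n_k} ≤ n_k` and sup-norm `1` on the
segment `Δ = [a,b]`, then `A = {z ∈ Δ : lim_k |q_{n_k}(z)|^{1/n_k} = 0}` is polar. -/
theorem polar_of_sup_norm_one (a b : ℝ) (hab : a < b)
    (n : ℕ → ℕ) (hmono : StrictMono n) (Q : ℕ → Polynomial ℂ)
    (hdeg : ∀ k, (Q k).natDegree ≤ n k)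
    (hnorm : ∀ k, IsGreatest
      ((fun x : ℝ => ‖(Q k).eval (x : ℂ)‖) '' Set.Icc a b) 1) :
    PolarSet {z : ℂ | z ∈ Complex.ofReal '' Set.Icc a b ∧
      Filter.Tendsto (fun k => ‖(Q k).eval z‖ ^ (1 / (n k : ℝ)))
        Filter.atTop (nhds 0)} := by
  refine polar_of_sup_norm_one_general a b hab n
    (hmono.tendsto_atTop.eventually_ne_atTop 0) Q hdeg fun k => ?_
  obtain ⟨z, hz, hz_one⟩ := (hnorm k).1
  exact ⟨z, hz, hz_one.ge⟩
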